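/- Let G be a simple graph on Fin N. The following are equivalent: (i) there exist a real number K > 0, intrinsic frequencies ω : Fin N → ℝ, and θ : Fin N → ℝ such that θ is a completely degenerate equilibrium of the non-identical Kuramoto system with coupling K and frequencies ω; (ii) G is bipartite (there is c : Fin N → Fin 2 with adjacent vertices receiving distinct colors). -/

import Mathlib

open Real

open Classical in
/-- Adjacency indicator: `1` if `j` and `k` are adjacent in `G`, `0` otherwise. -/
noncomputable def adjInd {V : Type*} (G : SimpleGraph V) (j k : V) : ℝ :=
  if G.Adj j k then 1 else 0

/-- A completely degenerate equilibrium of the identical Kuramoto system on `G`. -/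
def IsCDE {V : Type*} [Fintype V] (G : SimpleGraph V) (θ : V → ℝ) : Prop :=
  (∀ k, ∑ j, adjInd G j k * Real.sin (θ j - θ k) = 0) ∧
  (∀ j k, G.Adj j k → Real.cos (θ j - θ k) = 0)

/-- A completely degenerate equilibrium of the non-identical Kuramoto system with coupling
`K` and intrinsic frequencies `ω`. -/
def IsCDENonId {N : ℕ} (G : SimpleGraph (Fin N)) (K : ℝ) (ω θ : Fin N → ℝ) : Prop :=
  (∀ k, ω k + K * ∑ j, adjInd G j k * Real.sin (θ j - θ k) = 0) ∧
  (∀ j k, G.Adj j k → Real.cos (θ j - θ k) = 0)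

/-!
If `cos (x - y) = 0`, then `x` and `y` differ by an odd multiple of the quarter turn `π / 2`, so
`⌊x / (π / 2)⌋` and `⌊y / (π / 2)⌋` have opposite parities. At a completely degenerate equilibrium
the parity of `⌊θ v / (π / 2)⌋` is therefore a proper 2-colouring. Conversely, a colouring `c` with
values in `{0, 1}` gives the phases `θ v = c v * (π / 2)`; the balance equations can then always be
met, since they merely prescribe the intrinsic frequencies.
-/

theorem cos_intCast_mul_pi_div_two_eq_zero_iff {n : ℤ} : cos (n * (π / 2)) = 0 ↔ Odd n := by
  have hπ : π / 2 ≠ 0 := pi_div_two_pos.ne'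
  refine cos_eq_zero_iff.trans (exists_congr fun m => ?_)
  rw [mul_div_assoc, mul_left_inj' hπ]
  norm_cast

theorem odd_floor_sub_floor_of_cos_sub_eq_zero {x y : ℝ} (h : cos (x - y) = 0) :
    Odd (⌊x / (π / 2)⌋ - ⌊y / (π / 2)⌋) := by
  obtain ⟨m, hm⟩ := cos_eq_zero_iff.mp h
  have hxy : x / (π / 2) = y / (π / 2) + (2 * m + 1 : ℤ) := by
    rw [sub_eq_iff_eq_add'.mp hm]
    push_cast
    field_simp
  rw [hxy, Int.floor_add_intCast, add_sub_cancel_left]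
  exact odd_two_mul_add_one m

section Graphs

variable {V : Type*} (G : SimpleGraph V)

theorem isBipartite_iff_exists_fin_two :
    G.IsBipartite ↔ ∃ c : V → Fin 2, ∀ j k, G.Adj j k → c j ≠ c k :=
  ⟨fun ⟨C⟩ => ⟨C, fun _ _ => C.valid⟩, fun ⟨c, hc⟩ => ⟨.mk c (hc _ _)⟩⟩

theorem isBipartite_iff_exists_odd_sub :
    G.IsBipartite ↔ ∃ f : V → ℤ, ∀ j k, G.Adj j k → Odd (f j - f k) := by
  constructor
  · rintro ⟨C⟩
    refine ⟨fun v => (C v : ℕ), fun j k hjk => ?_⟩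
    have hne : (C j : ℕ) ≠ C k := Fin.val_ne_of_ne (C.valid hjk)
    simp only [Int.odd_iff]
    omega
  · rintro ⟨f, hf⟩
    let C : G.Coloring (ZMod 2) := .mk (fun v => (f v : ZMod 2)) fun {j k} hjk => by
      rw [← sub_ne_zero, ← Int.cast_sub, (hf j k hjk).intCast_zmod_two]
      exact one_ne_zero
    exact C.colorable

theorem isBipartite_iff_exists_cos_sub_eq_zero :
    G.IsBipartite ↔ ∃ θ : V → ℝ, ∀ j k, G.Adj j k → cos (θ j - θ k) = 0 := by
  rw [isBipartite_iff_exists_odd_sub]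
  constructor
  · rintro ⟨f, hf⟩
    refine ⟨fun v => f v * (π / 2), fun j k hjk => ?_⟩
    rw [← sub_mul, ← Int.cast_sub]
    exact cos_intCast_mul_pi_div_two_eq_zero_iff.mpr (hf j k hjk)
  · rintro ⟨θ, hθ⟩
    exact ⟨fun v => ⌊θ v / (π / 2)⌋, fun j k hjk =>
      odd_floor_sub_floor_of_cos_sub_eq_zero (hθ j k hjk)⟩

/-- A completely degenerate equilibrium of the non-identical Kuramoto system with coupling `K` and
intrinsic frequencies `ω`, on a locally finite but possibly infinite graph: the interaction sum
runs over the neighbours of each vertex, so that no adjacency indicator is needed. -/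
def IsCompletelyDegenerateEquilibrium [G.LocallyFinite] (K : ℝ) (ω θ : V → ℝ) : Prop :=
  (∀ k, ω k + K * ∑ j ∈ G.neighborFinset k, sin (θ j - θ k) = 0) ∧
  (∀ j k, G.Adj j k → cos (θ j - θ k) = 0)

theorem sum_adjInd_mul [Fintype V] (k : V) [Fintype (G.neighborSet k)] (f : V → ℝ) :
    ∑ j, adjInd G j k * f j = ∑ j ∈ G.neighborFinset k, f j := by
  classical
  simp_rw [adjInd, ite_mul, one_mul, zero_mul, ← Finset.sum_filter]
  exact Finset.sum_congr (by ext; simp [G.adj_comm]) fun _ _ => rfl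

theorem isCDENonId_iff_isCompletelyDegenerateEquilibrium {N : ℕ} (G : SimpleGraph (Fin N))
    [G.LocallyFinite] (K : ℝ) (ω θ : Fin N → ℝ) :
    IsCDENonId G K ω θ ↔ IsCompletelyDegenerateEquilibrium G K ω θ := by
  simp only [IsCDENonId, IsCompletelyDegenerateEquilibrium, sum_adjInd_mul]

theorem stmt15_general [G.LocallyFinite] (K : ℝ) :
    (∃ ω θ : V → ℝ, IsCompletelyDegenerateEquilibrium G K ω θ) ↔ G.IsBipartite := by
  rw [isBipartite_iff_exists_cos_sub_eq_zero]
  constructor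
  · rintro ⟨ω, θ, -, hcos⟩
    exact ⟨θ, hcos⟩
  · rintro ⟨θ, hcos⟩
    exact ⟨fun k => -(K * ∑ j ∈ G.neighborFinset k, sin (θ j - θ k)), θ,
      fun _ => neg_add_cancel _, hcos⟩

end Graphs

/-- the non-identical Kuramoto system on `G` supports a completely degenerate
equilibrium for some coupling `K > 0` and some intrinsic frequencies iff `G` is
bipartite. -/
theorem stmt15 {N : ℕ} (G : SimpleGraph (Fin N)) :
    (∃ (K : ℝ) (_ : 0 < K) (ω θ : Fin N → ℝ), IsCDENonId G K ω θ) ↔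
      ∃ c : Fin N → Fin 2, ∀ j k : Fin N, G.Adj j k → c j ≠ c k := by
  classical
  simp only [isCDENonId_iff_isCompletelyDegenerateEquilibrium, stmt15_general,
    ← isBipartite_iff_exists_fin_two, exists_prop, exists_and_right, exists_gt, true_and]
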